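/- Let p > 2 and suppose {(g_j, g_j*)} is an unconditional Schauder frame for L^p[0,1] such that ‖g_j‖_p = 1 for all j and |g_j(x)| ≤ M a.e. for some constant M. Then inf_j ‖g_j*‖ = 0; in particular the functionals {g_j*} are not seminormalized. -/

import Mathlib

open MeasureTheory

/-
If `‖φ j‖ ≥ c > 0` for all `j`, then `L^p` would have cotype `2`. Take `f j` with `φ j (f j) = 1`
and `‖f j‖ ≤ 2 / c`. Averaging over signs, `∑ b j • g j = 𝔼 ε, ∑ j, ε j • φ j (h ε) • g j` with
`h ε = ∑ k, ε k • b k • f k`, so unconditionality and the type `2` property of `L^p` (Khintchine)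
give `‖∑ b j • g j‖² ≲ ∑ |b j|²`. On the other hand, `|g j| ≤ M` and `‖g j‖_p = 1` keep the `L²`
norms of the `g j` away from `0`, so averaging `‖∑ ε j • φ j f • g j‖₂²` over signs gives
`∑ |φ j f|² ≲ ‖f‖²`. Applying the first bound with `b j = φ j (x i)`, and averaging the second over
`f = ∑ i, ε i • x i`, yields `∑ ‖x i‖² ≲ 𝔼 ε, ‖∑ ε i • x i‖²`. This fails for `n` disjoint unit
vectors, since `n ≤ C² n^(2/p)` is false for large `n` when `p > 2`.
-/

open scoped BigOperators ENNReal

section Signs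

variable {ι : Type*} [Fintype ι] [DecidableEq ι]

theorem sum_units_int_mul (i j : ι) :
    ∑ ε : ι → ℤˣ, ((ε i * ε j : ℤˣ) : ℤ) = if i = j then (Fintype.card (ι → ℤˣ) : ℤ) else 0 := by
  split_ifs with hij
  · subst hij
    simp [Int.units_mul_self]
  · have flip : ∑ ε : ι → ℤˣ, ((ε i * ε j : ℤˣ) : ℤ)
        = -∑ ε : ι → ℤˣ, ((ε i * ε j : ℤˣ) : ℤ) := by
      rw [← Finset.sum_neg_distrib]
      refine Fintype.sum_equiv (Equiv.mulLeft (Pi.mulSingle i (-1))) _ _ fun ε ↦ ?_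
      simp [Pi.mulSingle_eq_of_ne (Ne.symm hij)]
    exact self_eq_neg.mp flip

theorem card_nsmul_sum_diag {E : Type*} [AddCommGroup E] (T : ι → ι → E) :
    Fintype.card (ι → ℤˣ) • ∑ j, T j j
      = ∑ ε : ι → ℤˣ, ∑ j, ∑ k, (ε j * ε k) • T j k := by
  symm
  calc ∑ ε : ι → ℤˣ, ∑ j, ∑ k, (ε j * ε k) • T j k
      = ∑ j, ∑ k, (∑ ε : ι → ℤˣ, ((ε j * ε k : ℤˣ) : ℤ)) • T j k := by
        simp only [Finset.sum_smul, ← Units.smul_def]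
        rw [Finset.sum_comm]
        exact Finset.sum_congr rfl fun j _ ↦ Finset.sum_comm
    _ = Fintype.card (ι → ℤˣ) • ∑ j, T j j := by
        simp only [sum_units_int_mul, ite_smul, zero_smul, Finset.sum_ite_eq, Finset.mem_univ,
          if_true, natCast_zsmul, Finset.smul_sum]

theorem expect_sum_units_int_smul (T : ι → ι → ℝ) :
    𝔼 ε : ι → ℤˣ, ∑ j, ∑ k, (ε j * ε k) • T j k = ∑ j, T j j := by
  rw [Fintype.expect_eq_sum_div_card, ← card_nsmul_sum_diag, nsmul_eq_mul,
    mul_div_cancel_left₀ _ (Nat.cast_ne_zero.mpr Fintype.card_ne_zero)]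

theorem norm_sum_diag_le_expect (𝕜 : Type*) {E : Type*} [RCLike 𝕜] [NormedAddCommGroup E]
    [NormedSpace 𝕜 E] (T : ι → ι → E) :
    ‖∑ j, T j j‖ ≤ 𝔼 ε : ι → ℤˣ, ‖∑ j, ∑ k, (ε j * ε k) • T j k‖ := by
  have hcard : (0 : ℝ) < Fintype.card (ι → ℤˣ) := Nat.cast_pos.mpr Fintype.card_pos
  calc ‖∑ j, T j j‖
      = ‖∑ ε : ι → ℤˣ, ∑ j, ∑ k, (ε j * ε k) • T j k‖ / Fintype.card (ι → ℤˣ) := by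
        rw [← card_nsmul_sum_diag, RCLike.norm_nsmul 𝕜, nsmul_eq_mul,
          mul_div_cancel_left₀ _ hcard.ne']
    _ ≤ 𝔼 ε : ι → ℤˣ, ‖∑ j, ∑ k, (ε j * ε k) • T j k‖ := by
        rw [Fintype.expect_eq_sum_div_card]
        gcongr
        exact norm_sum_le _ _

theorem expect_norm_sq_sum_smul (𝕜 : Type*) {H : Type*} [RCLike 𝕜] [NormedAddCommGroup H]
    [InnerProductSpace 𝕜 H] (x : ι → H) :
    𝔼 ε : ι → ℤˣ, ‖∑ j, ε j • x j‖ ^ 2 = ∑ j, ‖x j‖ ^ 2 := by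
  have expand (ε : ι → ℤˣ) : ‖∑ j, ε j • x j‖ ^ 2
      = ∑ j, ∑ k, (ε j * ε k) • RCLike.re (inner 𝕜 (x j) (x k)) := by
    simp only [← inner_self_eq_norm_sq (𝕜 := 𝕜), sum_inner, inner_sum, map_sum]
    rw [Finset.sum_comm]
    refine Finset.sum_congr rfl fun j _ ↦ Finset.sum_congr rfl fun k _ ↦ ?_
    obtain hj | hj := Int.units_eq_one_or (ε j) <;> obtain hk | hk := Int.units_eq_one_or (ε k) <;>
      simp [hj, hk, Units.smul_def]
  simp only [expand, expect_sum_units_int_smul, inner_self_eq_norm_sq]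

theorem expect_exp_sum_smul_le (a : ι → ℝ) :
    𝔼 ε : ι → ℤˣ, Real.exp (∑ j, ε j • a j) ≤ Real.exp ((∑ j, a j ^ 2) / 2) := by
  have cosh_eq (x : ℝ) : ∑ u : ℤˣ, Real.exp (u • x) = 2 * Real.cosh x := by
    rw [UnitsInt.univ, Finset.sum_pair (by decide), one_smul, Units.neg_smul, one_smul,
      Real.cosh_eq]
    ring
  calc 𝔼 ε : ι → ℤˣ, Real.exp (∑ j, ε j • a j)
      = (∏ j, ∑ u : ℤˣ, Real.exp (u • a j)) / Fintype.card (ι → ℤˣ) := by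
        simp only [Fintype.expect_eq_sum_div_card, Real.exp_sum, Finset.prod_univ_sum,
          Fintype.piFinset_univ]
    _ = ∏ j, Real.cosh (a j) := by
        simp only [cosh_eq, Finset.prod_mul_distrib]
        simp
    _ ≤ ∏ j, Real.exp (a j ^ 2 / 2) := by
        gcongr with j
        exact Real.cosh_le_exp_half_sq (a j)
    _ = Real.exp ((∑ j, a j ^ 2) / 2) := by rw [Finset.sum_div, Real.exp_sum]

theorem expect_exp_abs_sum_smul_le (a : ι → ℝ) :
    𝔼 ε : ι → ℤˣ, Real.exp |∑ j, ε j • a j| ≤ 2 * Real.exp ((∑ j, a j ^ 2) / 2) := by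
  calc 𝔼 ε : ι → ℤˣ, Real.exp |∑ j, ε j • a j|
      ≤ 𝔼 ε : ι → ℤˣ, (Real.exp (∑ j, ε j • a j) + Real.exp (∑ j, ε j • -a j)) := by
        gcongr with ε
        simp only [smul_neg, Finset.sum_neg_distrib]
        exact Real.exp_abs_le _
    _ ≤ 2 * Real.exp ((∑ j, a j ^ 2) / 2) := by
        rw [Finset.expect_add_distrib]
        have h₁ := expect_exp_sum_smul_le a
        have h₂ := expect_exp_sum_smul_le fun j ↦ -a j
        simp only [neg_sq] at h₂
        linarith

theorem rpow_le_rpow_mul_exp {p s t : ℝ} (hp : 0 < p) (hs : 0 < s) (ht : 0 ≤ t) :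
    t ^ p ≤ (p * s) ^ p * Real.exp (t / s) := by
  have le_mul_exp : t ≤ p * s * Real.exp (t / (p * s)) := by
    rw [← div_le_iff₀' (by positivity)]
    linarith [Real.add_one_le_exp (t / (p * s))]
  calc t ^ p ≤ (p * s * Real.exp (t / (p * s))) ^ p := by gcongr
    _ = (p * s) ^ p * Real.exp (t / s) := by
      rw [Real.mul_rpow (by positivity) (by positivity), ← Real.exp_mul]
      congr 2
      field_simp

theorem expect_abs_rpow_le {p : ℝ} (hp : 0 < p) (a : ι → ℝ) :
    𝔼 ε : ι → ℤˣ, |∑ j, ε j • a j| ^ p ≤ 4 * p ^ p * (∑ j, a j ^ 2) ^ (p / 2) := by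
  set A := ∑ j, a j ^ 2
  have hA0 : 0 ≤ A := by positivity
  obtain hA_zero | hA_pos := hA0.eq_or_lt
  · have ha : ∀ j, a j = 0 := fun j ↦ by
      simpa using (Finset.sum_eq_zero_iff_of_nonneg fun j _ ↦ sq_nonneg (a j)).mp hA_zero.symm j
        (Finset.mem_univ j)
    simp [ha, ← hA_zero, hp.ne']
  · have normalized : ∑ j, (a j / √A) ^ 2 = 1 := by
      simp only [div_pow, Real.sq_sqrt hA0, ← Finset.sum_div]
      exact div_self hA_pos.ne'
    have exp_one : 2 * Real.exp (1 / 2) ≤ 4 := by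
      have : Real.exp (1 / 2) ^ 2 = Real.exp 1 := by rw [← Real.exp_nat_mul]; norm_num
      nlinarith [Real.exp_one_lt_d9, Real.exp_pos (1 / 2)]
    calc 𝔼 ε : ι → ℤˣ, |∑ j, ε j • a j| ^ p
        ≤ 𝔼 ε : ι → ℤˣ, (p * √A) ^ p * Real.exp |∑ j, ε j • (a j / √A)| := by
          gcongr with ε
          simp only [← smul_div_assoc, ← Finset.sum_div, abs_div,
            abs_of_nonneg (Real.sqrt_nonneg A)]
          exact rpow_le_rpow_mul_exp hp (Real.sqrt_pos.mpr hA_pos) (abs_nonneg _)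
      _ ≤ (p * √A) ^ p * 4 := by
          rw [← Finset.mul_expect]
          gcongr
          refine (expect_exp_abs_sum_smul_le _).trans ?_
          rwa [normalized]
      _ = 4 * p ^ p * A ^ (p / 2) := by
          rw [Real.mul_rpow hp.le (Real.sqrt_nonneg A), Real.sqrt_eq_rpow, ← Real.rpow_mul hA0]
          ring_nf

theorem norm_rpow_le_abs_re_rpow_add_abs_im_rpow {𝕜 : Type*} [RCLike 𝕜] {p : ℝ} (hp : 0 < p)
    (z : 𝕜) :
    ‖z‖ ^ p ≤ 2 ^ p * (|RCLike.re z| ^ p + |RCLike.im z| ^ p) := by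
  have hz : ‖z‖ ≤ 2 * max |RCLike.re z| |RCLike.im z| := by
    have hre : |RCLike.re z| ≤ max |RCLike.re z| |RCLike.im z| := le_max_left _ _
    have him : |RCLike.im z| ≤ max |RCLike.re z| |RCLike.im z| := le_max_right _ _
    refine (abs_le_of_sq_le_sq' ?_ (by positivity)).2
    rw [RCLike.norm_sq_eq_def, ← pow_two, ← pow_two, ← sq_abs (RCLike.re z), ← sq_abs (RCLike.im z)]
    nlinarith [abs_nonneg (RCLike.re z), abs_nonneg (RCLike.im z)]
  calc ‖z‖ ^ p ≤ (2 * max |RCLike.re z| |RCLike.im z|) ^ p := by gcongr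
    _ = 2 ^ p * max |RCLike.re z| |RCLike.im z| ^ p :=
      Real.mul_rpow (by norm_num) (by positivity)
    _ ≤ 2 ^ p * (|RCLike.re z| ^ p + |RCLike.im z| ^ p) := by
      gcongr
      obtain h | h := max_choice |RCLike.re z| |RCLike.im z| <;> rw [h]
      · exact le_add_of_nonneg_right (by positivity)
      · exact le_add_of_nonneg_left (by positivity)

theorem expect_norm_rpow_le {𝕜 : Type*} [RCLike 𝕜] {p : ℝ} (hp : 0 < p) (z : ι → 𝕜) :
    𝔼 ε : ι → ℤˣ, ‖∑ j, ε j • z j‖ ^ p ≤ 8 * (2 * p) ^ p * (∑ j, ‖z j‖ ^ 2) ^ (p / 2) := by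
  have re_sum (ε : ι → ℤˣ) : RCLike.re (∑ j, ε j • z j) = ∑ j, ε j • RCLike.re (z j) := by
    simp [Units.smul_def]
  have im_sum (ε : ι → ℤˣ) : RCLike.im (∑ j, ε j • z j) = ∑ j, ε j • RCLike.im (z j) := by
    simp [Units.smul_def]
  calc 𝔼 ε : ι → ℤˣ, ‖∑ j, ε j • z j‖ ^ p
      ≤ 𝔼 ε : ι → ℤˣ, 2 ^ p *
          (|∑ j, ε j • RCLike.re (z j)| ^ p + |∑ j, ε j • RCLike.im (z j)| ^ p) := by
        gcongr with ε
        simpa only [re_sum, im_sum] using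
          norm_rpow_le_abs_re_rpow_add_abs_im_rpow hp (∑ j, ε j • z j)
    _ ≤ 2 ^ p * (4 * p ^ p * (∑ j, RCLike.re (z j) ^ 2) ^ (p / 2) +
          4 * p ^ p * (∑ j, RCLike.im (z j) ^ 2) ^ (p / 2)) := by
        rw [← Finset.mul_expect, Finset.expect_add_distrib]
        gcongr <;> exact expect_abs_rpow_le hp _
    _ ≤ 2 ^ p * (4 * p ^ p * (∑ j, ‖z j‖ ^ 2) ^ (p / 2) +
          4 * p ^ p * (∑ j, ‖z j‖ ^ 2) ^ (p / 2)) := by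
        gcongr 2 ^ p * (_ * (∑ j, ?_) ^ _ + _ * (∑ j, ?_) ^ _) with j _ j _
        · exact sq_le_sq.mpr ((RCLike.abs_re_le_norm _).trans (le_abs_self _))
        · exact sq_le_sq.mpr ((RCLike.abs_im_le_norm _).trans (le_abs_self _))
    _ = 8 * (2 * p) ^ p * (∑ j, ‖z j‖ ^ 2) ^ (p / 2) := by
        rw [Real.mul_rpow (by norm_num) hp.le]
        ring

end Signs

theorem rpow_expect_le_expect_rpow {κ : Type*} [Fintype κ] [Nonempty κ] {q : ℝ} (hq : 1 ≤ q)
    {f : κ → ℝ} (hf : ∀ k, 0 ≤ f k) : (𝔼 k, f k) ^ q ≤ 𝔼 k, f k ^ q := by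
  have h := Real.rpow_arith_mean_le_arith_mean_rpow Finset.univ
    (fun _ ↦ (Fintype.card κ : ℝ)⁻¹) f (fun _ _ ↦ by positivity) (by simp) (fun k _ ↦ hf k) hq
  simpa only [← Finset.mul_sum, Fintype.expect_eq_sum_div_card, div_eq_inv_mul] using h

/-- A normed group has (Rademacher) type `2` with constant `C`. Stating it for families indexed by
`Fin n` avoids a universe parameter; see `HasTypeTwo.expect_norm_sq_le` for arbitrary finite
families. -/
def HasTypeTwo (E : Type*) [NormedAddCommGroup E] (C : ℝ) : Prop :=
  ∀ ⦃n : ℕ⦄ (x : Fin n → E),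
    𝔼 ε : Fin n → ℤˣ, ‖∑ i, ε i • x i‖ ^ 2 ≤ C ^ 2 * ∑ i, ‖x i‖ ^ 2

/-- A normed group has (Rademacher) cotype `2` with constant `C`. -/
def HasCotypeTwo (E : Type*) [NormedAddCommGroup E] (C : ℝ) : Prop :=
  ∀ ⦃n : ℕ⦄ (x : Fin n → E),
    ∑ i, ‖x i‖ ^ 2 ≤ C ^ 2 * 𝔼 ε : Fin n → ℤˣ, ‖∑ i, ε i • x i‖ ^ 2

theorem HasTypeTwo.expect_norm_sq_le {E : Type*} [NormedAddCommGroup E] {C : ℝ}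
    (hE : HasTypeTwo E C) {ι : Type*} [Fintype ι] [DecidableEq ι] (x : ι → E) :
    𝔼 ε : ι → ℤˣ, ‖∑ i, ε i • x i‖ ^ 2 ≤ C ^ 2 * ∑ i, ‖x i‖ ^ 2 := by
  let e := Fintype.equivFin ι
  calc 𝔼 ε : ι → ℤˣ, ‖∑ i, ε i • x i‖ ^ 2
      = 𝔼 ε : Fin (Fintype.card ι) → ℤˣ, ‖∑ i, ε i • x (e.symm i)‖ ^ 2 := by
        refine Fintype.expect_equiv (e.arrowCongr (Equiv.refl ℤˣ)) _ _ fun ε ↦ ?_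
        rw [← e.symm.sum_comp fun i ↦ ε i • x i]
        rfl
    _ ≤ C ^ 2 * ∑ i, ‖x (e.symm i)‖ ^ 2 := hE _
    _ = C ^ 2 * ∑ i, ‖x i‖ ^ 2 := by rw [e.symm.sum_comp fun i ↦ ‖x i‖ ^ 2]

section Lp

variable {α E : Type*} [MeasurableSpace α] {μ : Measure α} [NormedAddCommGroup E] {p : ℝ≥0∞}

theorem Lp_norm_eq_lpNorm (F : Lp E p μ) : ‖F‖ = lpNorm F p μ := by
  rw [Lp.norm_def, toReal_eLpNorm (Lp.aestronglyMeasurable F)]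

theorem lpNorm_rpow_toReal {f : α → E} (hp₀ : p ≠ 0) (hp : p ≠ ∞)
    (hf : AEStronglyMeasurable f μ) :
    lpNorm f p μ ^ p.toReal = ∫ x, ‖f x‖ ^ p.toReal ∂μ := by
  rw [lpNorm_eq_integral_norm_rpow_toReal hp₀ hp hf,
    Real.rpow_inv_rpow (by positivity) (ENNReal.toReal_ne_zero.mpr ⟨hp₀, hp⟩)]

theorem Lp_norm_rpow_toReal (hp₀ : p ≠ 0) (hp : p ≠ ∞) (F : Lp E p μ) :
    ‖F‖ ^ p.toReal = ∫ x, ‖F x‖ ^ p.toReal ∂μ := by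
  rw [Lp_norm_eq_lpNorm, lpNorm_rpow_toReal hp₀ hp (Lp.aestronglyMeasurable F)]

theorem lpNorm_norm_sq {f : α → E} (hf : AEStronglyMeasurable f μ) :
    lpNorm (fun x ↦ ‖f x‖ ^ 2) (p / 2) μ = lpNorm f p μ ^ 2 := by
  have h := eLpNorm_norm_rpow (p := p / 2) (μ := μ) f two_pos
  rw [ENNReal.ofReal_ofNat, ENNReal.div_mul_cancel two_ne_zero ENNReal.ofNat_ne_top] at h
  simp only [Real.rpow_two, ENNReal.rpow_ofNat] at h
  have hsq : AEStronglyMeasurable (fun x ↦ ‖f x‖ ^ 2) μ := hf.norm.pow 2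
  rw [← toReal_eLpNorm hsq, h, ENNReal.toReal_pow, toReal_eLpNorm hf]

variable {ι : Type*} [Fintype ι]

theorem memLp_sum_norm_sq (F : ι → Lp E p μ) : MemLp (fun x ↦ ∑ i, ‖F i x‖ ^ 2) (p / 2) μ :=
  memLp_finsetSum _ fun i _ ↦ by simpa using (Lp.memLp (F i)).norm_rpow_div 2

theorem integrable_sum_norm_sq_rpow (hp : 2 ≤ p) (hp_top : p ≠ ∞) (F : ι → Lp E p μ) :
    Integrable (fun x ↦ (∑ i, ‖F i x‖ ^ 2) ^ (p.toReal / 2)) μ := by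
  have h := (memLp_sum_norm_sq F).integrable_norm_rpow (by simpa using (two_pos.trans_le hp).ne')
    (ENNReal.div_ne_top hp_top two_ne_zero)
  rw [ENNReal.toReal_div, ENNReal.toReal_ofNat] at h
  simpa only [Real.norm_of_nonneg (Finset.sum_nonneg fun i _ ↦ sq_nonneg ‖F i _‖)] using h

theorem integral_sum_norm_sq_rpow_le (hp : 2 ≤ p) (hp_top : p ≠ ∞) (F : ι → Lp E p μ) :
    ∫ x, (∑ i, ‖F i x‖ ^ 2) ^ (p.toReal / 2) ∂μ ≤ (∑ i, ‖F i‖ ^ 2) ^ (p.toReal / 2) := by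
  have half_ne_zero : p / 2 ≠ 0 := by simpa using (two_pos.trans_le hp).ne'
  have half_ne_top : p / 2 ≠ ∞ := ENNReal.div_ne_top hp_top two_ne_zero
  have one_le_half : 1 ≤ p / 2 := by
    rwa [ENNReal.le_div_iff_mul_le (by simp) (by simp), one_mul]
  have minkowski : lpNorm (fun x ↦ ∑ i, ‖F i x‖ ^ 2) (p / 2) μ ≤ ∑ i, ‖F i‖ ^ 2 := by
    simp only [Lp_norm_eq_lpNorm, ← lpNorm_norm_sq (Lp.aestronglyMeasurable _)]
    convert! lpNorm_sum_le (f := fun i x ↦ ‖F i x‖ ^ 2) (s := Finset.univ) (fun i _ ↦ ?_)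
      one_le_half
    · simp
    · simpa using (Lp.memLp (F i)).norm_rpow_div 2
  calc ∫ x, (∑ i, ‖F i x‖ ^ 2) ^ (p.toReal / 2) ∂μ
      = lpNorm (fun x ↦ ∑ i, ‖F i x‖ ^ 2) (p / 2) μ ^ (p.toReal / 2) := by
        have h := lpNorm_rpow_toReal half_ne_zero half_ne_top (memLp_sum_norm_sq F).1
        rw [ENNReal.toReal_div, ENNReal.toReal_ofNat] at h
        simp only [h, Real.norm_of_nonneg (Finset.sum_nonneg fun i _ ↦ sq_nonneg ‖F i _‖)]
    _ ≤ (∑ i, ‖F i‖ ^ 2) ^ (p.toReal / 2) := by gcongr; exact lpNorm_nonneg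

theorem coeFn_sum_units_smul (F : ι → Lp E p μ) :
    ∀ᵐ x ∂μ, ∀ ε : ι → ℤˣ, (∑ i, ε i • F i : Lp E p μ) x = ∑ i, ε i • F i x := by
  refine ae_all_iff.mpr fun ε ↦ ?_
  have smul_ae : ∀ᵐ x ∂μ, ∀ i, (ε i • F i : Lp E p μ) x = ε i • F i x :=
    ae_all_iff.mpr fun i ↦ by
      obtain h | h := Int.units_eq_one_or (ε i)
      · simp [h]
      · filter_upwards [Lp.coeFn_neg (F i)] with x hx
        simpa [h, Units.smul_def] using hx
  filter_upwards [Lp.coeFn_fun_finsetSum Finset.univ fun i ↦ ε i • F i, smul_ae] with x hsum hsmul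
  simp only [hsum, hsmul]

variable {𝕜 : Type*} [RCLike 𝕜]

theorem expect_norm_sum_smul_rpow_le [DecidableEq ι] (hp : 2 ≤ p) (hp_top : p ≠ ∞)
    (F : ι → Lp 𝕜 p μ) :
    𝔼 ε : ι → ℤˣ, ‖∑ i, ε i • F i‖ ^ p.toReal ≤
      8 * (2 * p.toReal) ^ p.toReal * (∑ i, ‖F i‖ ^ 2) ^ (p.toReal / 2) := by
  have p_ne_zero : p ≠ 0 := (two_pos.trans_le hp).ne'
  have p_pos : 0 < p.toReal := ENNReal.toReal_pos p_ne_zero hp_top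
  have integrable_rpow (G : Lp 𝕜 p μ) : Integrable (fun x ↦ ‖G x‖ ^ p.toReal) μ :=
    (Lp.memLp G).integrable_norm_rpow p_ne_zero hp_top
  calc 𝔼 ε : ι → ℤˣ, ‖∑ i, ε i • F i‖ ^ p.toReal
      = ∫ x, 𝔼 ε : ι → ℤˣ, ‖(∑ i, ε i • F i : Lp 𝕜 p μ) x‖ ^ p.toReal ∂μ := by
        simp only [Lp_norm_rpow_toReal p_ne_zero hp_top, Fintype.expect_eq_sum_div_card]
        rw [integral_div, integral_finsetSum _ fun ε _ ↦ integrable_rpow _]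
    _ ≤ ∫ x, 8 * (2 * p.toReal) ^ p.toReal * (∑ i, ‖F i x‖ ^ 2) ^ (p.toReal / 2) ∂μ := by
        refine integral_mono_of_nonneg (.of_forall fun x ↦ by positivity)
          ((integrable_sum_norm_sq_rpow hp hp_top F).const_mul _) ?_
        filter_upwards [coeFn_sum_units_smul F] with x hx
        simpa only [hx] using expect_norm_rpow_le p_pos fun i ↦ F i x
    _ ≤ 8 * (2 * p.toReal) ^ p.toReal * (∑ i, ‖F i‖ ^ 2) ^ (p.toReal / 2) := by
        rw [integral_const_mul]
        gcongr
        exact integral_sum_norm_sq_rpow_le hp hp_top F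

theorem hasTypeTwo_Lp [Fact (1 ≤ p)] (hp : 2 ≤ p) (hp_top : p ≠ ∞) :
    HasTypeTwo (Lp 𝕜 p μ) ((8 * (2 * p.toReal) ^ p.toReal) ^ (1 / p.toReal)) := by
  intro n F
  have p_pos : 0 < p.toReal := ENNReal.toReal_pos (two_pos.trans_le hp).ne' hp_top
  have two_le : 2 ≤ p.toReal := by simpa using ENNReal.toReal_mono hp_top hp
  set D := 8 * (2 * p.toReal) ^ p.toReal
  have rpow_le : (𝔼 ε : Fin n → ℤˣ, ‖∑ i, ε i • F i‖ ^ 2) ^ (p.toReal / 2) ≤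
      ((D ^ (1 / p.toReal)) ^ 2 * ∑ i, ‖F i‖ ^ 2) ^ (p.toReal / 2) := by
    calc (𝔼 ε : Fin n → ℤˣ, ‖∑ i, ε i • F i‖ ^ 2) ^ (p.toReal / 2)
        ≤ 𝔼 ε : Fin n → ℤˣ, (‖∑ i, ε i • F i‖ ^ 2) ^ (p.toReal / 2) :=
          rpow_expect_le_expect_rpow (by linarith) fun ε ↦ sq_nonneg _
      _ = 𝔼 ε : Fin n → ℤˣ, ‖∑ i, ε i • F i‖ ^ p.toReal := by
          simp only [← Real.rpow_natCast_mul (norm_nonneg _), Nat.cast_ofNat,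
            mul_div_cancel₀ p.toReal two_ne_zero]
      _ ≤ D * (∑ i, ‖F i‖ ^ 2) ^ (p.toReal / 2) := expect_norm_sum_smul_rpow_le hp hp_top F
      _ = ((D ^ (1 / p.toReal)) ^ 2 * ∑ i, ‖F i‖ ^ 2) ^ (p.toReal / 2) := by
          rw [Real.mul_rpow (by positivity) (by positivity),
            ← Real.rpow_mul_natCast (by positivity), ← Real.rpow_mul (by positivity),
            Nat.cast_ofNat, one_div_mul_eq_div, div_mul_div_cancel₀ p_pos.ne', div_self two_ne_zero,
            Real.rpow_one]
  exact (Real.rpow_le_rpow_iff (by positivity) (by positivity) (by positivity)).mp rpow_le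

end Lp

section Frames

variable {𝕜 E ι : Type*} [NontriviallyNormedField 𝕜] [NormedAddCommGroup E] [NormedSpace 𝕜 E]

/-- `(g, φ)` is an unconditional Schauder frame: every vector `f` is the unconditional sum of
`φ j f • g j`, `HasSum` being unconditional summability along finite subsets of `ι`. -/
def IsUnconditionalFrame (g : ι → E) (φ : ι → E →L[𝕜] 𝕜) : Prop :=
  ∀ f, HasSum (fun j ↦ φ j f • g j) f

/-- The sign multipliers `f ↦ ∑ j, ε j • φ j f • g j` of a finite family have norm at most `K`. -/
def HasSignBound [Fintype ι] (g : ι → E) (φ : ι → E →L[𝕜] 𝕜) (K : ℝ) : Prop :=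
  ∀ (ε : ι → ℤˣ) (f : E), ‖∑ j, ε j • φ j f • g j‖ ≤ K * ‖f‖

theorem IsUnconditionalFrame.exists_norm_sum_le [CompleteSpace E] {g : ι → E}
    {φ : ι → E →L[𝕜] 𝕜} (h : IsUnconditionalFrame g φ) :
    ∃ K, ∀ (s : Finset ι) (f : E), ‖∑ j ∈ s, φ j f • g j‖ ≤ K * ‖f‖ := by
  classical
  let S (s : Finset ι) : E →L[𝕜] E := ∑ j ∈ s, (φ j).smulRight (g j)
  have S_apply (s : Finset ι) (f : E) : S s f = ∑ j ∈ s, φ j f • g j := by simp [S]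
  obtain ⟨K, hK⟩ := banach_steinhaus (g := S) fun f ↦ by
    obtain ⟨t, ht⟩ := summable_iff_vanishing_norm.mp (h f).summable 1 one_pos
    refine ⟨1 + ∑ j ∈ t, ‖φ j f • g j‖, fun s ↦ ?_⟩
    rw [S_apply, ← Finset.sum_inter_add_sum_sdiff s t, add_comm]
    refine (norm_add_le _ _).trans (add_le_add (ht _ Finset.sdiff_disjoint).le ?_)
    exact (norm_sum_le _ _).trans
      (Finset.sum_le_sum_of_subset_of_nonneg Finset.inter_subset_right fun _ _ _ ↦ norm_nonneg _)
  exact ⟨K, fun s f ↦ S_apply s f ▸ (S s).le_of_opNorm_le (hK s) f⟩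

theorem sum_units_smul [Fintype ι] {G : Type*} [AddCommGroup G] (ε : ι → ℤˣ) (x : ι → G) :
    ∑ j, ε j • x j = ∑ j with ε j = 1, x j - ∑ j with ε j ≠ 1, x j := by
  rw [← Finset.sum_filter_add_sum_filter_not Finset.univ (fun j ↦ ε j = 1), sub_eq_add_neg,
    ← Finset.sum_neg_distrib]
  congr 1 <;> refine Finset.sum_congr rfl fun j hj ↦ ?_
  · simp [(Finset.mem_filter.mp hj).2]
  · simp [(Int.units_eq_one_or (ε j)).resolve_left (Finset.mem_filter.mp hj).2, Units.smul_def]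

theorem IsUnconditionalFrame.exists_hasSignBound [CompleteSpace E] {g : ι → E}
    {φ : ι → E →L[𝕜] 𝕜} (h : IsUnconditionalFrame g φ) :
    ∃ K, ∀ s : Finset ι, HasSignBound (fun j : s ↦ g j) (fun j : s ↦ φ j) K := by
  obtain ⟨K, hK⟩ := h.exists_norm_sum_le
  refine ⟨2 * K, fun s ε f ↦ ?_⟩
  have hK_sub (t : Finset s) : ‖∑ j ∈ t, φ j f • g j‖ ≤ K * ‖f‖ := by
    simpa using hK (t.map (Function.Embedding.subtype _)) f
  rw [sum_units_smul]
  linarith [norm_sub_le (∑ j with ε j = 1, φ j f • g j) (∑ j with ε j ≠ 1, φ j f • g j),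
    hK_sub {j | ε j = 1}, hK_sub {j | ε j ≠ 1}]

theorem exists_apply_eq_one_norm_le {𝕜 E : Type*} [DenselyNormedField 𝕜] [NormedAddCommGroup E]
    [NormedSpace 𝕜 E] {ψ : E →L[𝕜] 𝕜} {c : ℝ} (hc : 0 < c) (hψ : c ≤ ‖ψ‖) :
    ∃ f, ψ f = 1 ∧ ‖f‖ ≤ 2 / c := by
  obtain ⟨f, hf, hψf⟩ := ψ.exists_lt_apply_of_lt_opNorm ((half_lt_self hc).trans_le hψ)
  have hψf_pos : 0 < ‖ψ f‖ := (half_pos hc).trans hψf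
  refine ⟨(ψ f)⁻¹ • f, by simp [norm_pos_iff.mp hψf_pos], ?_⟩
  rw [norm_smul, norm_inv, ← inv_div, ← div_eq_inv_mul, div_eq_mul_inv]
  exact (mul_le_of_le_one_left (by positivity) hf.le).trans (by gcongr)

end Frames

section SignBound

variable {𝕜 E ι : Type*} [RCLike 𝕜] [NormedAddCommGroup E] [NormedSpace 𝕜 E]

section Finite

variable [Fintype ι] {g : ι → E} {φ : ι → E →L[𝕜] 𝕜} {K : ℝ}

theorem HasSignBound.sum_norm_sq_mul_le (hK : HasSignBound g φ K) {H : Type*}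
    [NormedAddCommGroup H] [InnerProductSpace 𝕜 H] (u : E →L[𝕜] H) (f : E) :
    ∑ j, (‖φ j f‖ * ‖u (g j)‖) ^ 2 ≤ (‖u‖ * (K * ‖f‖)) ^ 2 := by
  classical
  calc ∑ j, (‖φ j f‖ * ‖u (g j)‖) ^ 2
      = 𝔼 ε : ι → ℤˣ, ‖∑ j, ε j • φ j f • u (g j)‖ ^ 2 := by
        simp only [expect_norm_sq_sum_smul 𝕜, norm_smul]
    _ = 𝔼 ε : ι → ℤˣ, ‖u (∑ j, ε j • φ j f • g j)‖ ^ 2 := by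
        simp only [map_sum, Units.smul_def, map_zsmul, map_smul]
    _ ≤ 𝔼 _ε : ι → ℤˣ, (‖u‖ * (K * ‖f‖)) ^ 2 := by
        gcongr with ε
        exact u.le_opNorm_of_le (hK ε f)
    _ = (‖u‖ * (K * ‖f‖)) ^ 2 := Fintype.expect_const _

theorem HasSignBound.sum_norm_sq_le (hK : HasSignBound g φ K) {H : Type*}
    [NormedAddCommGroup H] [InnerProductSpace 𝕜 H] {u : E →L[𝕜] H} {η : ℝ} (hη : 0 < η)
    (hu : ∀ j, η ≤ ‖u (g j)‖) (f : E) :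
    ∑ j, ‖φ j f‖ ^ 2 ≤ (‖u‖ * K / η) ^ 2 * ‖f‖ ^ 2 := by
  have mul_sq_le : (∑ j, ‖φ j f‖ ^ 2) * η ^ 2 ≤ (‖u‖ * (K * ‖f‖)) ^ 2 := by
    simp only [Finset.sum_mul, ← mul_pow]
    refine (Finset.sum_le_sum fun j _ ↦ ?_).trans (hK.sum_norm_sq_mul_le u f)
    gcongr
    exact hu j
  calc ∑ j, ‖φ j f‖ ^ 2 ≤ (‖u‖ * (K * ‖f‖)) ^ 2 / η ^ 2 :=
        (le_div_iff₀ (by positivity)).mpr mul_sq_le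
    _ = (‖u‖ * K / η) ^ 2 * ‖f‖ ^ 2 := by ring

theorem HasSignBound.norm_sum_smul_le [DecidableEq ι] (hK : HasSignBound g φ K)
    {f : ι → E} (hf : ∀ j, φ j (f j) = 1) (b : ι → 𝕜) :
    ‖∑ j, b j • g j‖ ≤ K * 𝔼 ε : ι → ℤˣ, ‖∑ k, ε k • b k • f k‖ := by
  have factor (ε : ι → ℤˣ) : ∑ j, ∑ k, (ε j * ε k) • φ j (b k • f k) • g j
      = ∑ j, ε j • φ j (∑ k, ε k • b k • f k) • g j := by
    simp only [map_sum, Finset.sum_smul, Finset.smul_sum, mul_smul, Units.smul_def, map_zsmul,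
      smul_assoc]
  calc ‖∑ j, b j • g j‖ = ‖∑ j, φ j (b j • f j) • g j‖ := by simp [hf]
    _ ≤ 𝔼 ε : ι → ℤˣ, ‖∑ j, ∑ k, (ε j * ε k) • φ j (b k • f k) • g j‖ :=
        norm_sum_diag_le_expect 𝕜 fun j k ↦ φ j (b k • f k) • g j
    _ ≤ 𝔼 ε : ι → ℤˣ, K * ‖∑ k, ε k • b k • f k‖ := by
        gcongr with ε
        rw [factor]
        exact hK ε _
    _ = K * 𝔼 ε : ι → ℤˣ, ‖∑ k, ε k • b k • f k‖ := (Finset.mul_expect _ _ _).symm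

theorem HasSignBound.norm_sum_smul_sq_le (hK : HasSignBound g φ K) {C c : ℝ} (hE : HasTypeTwo E C)
    (hc : 0 < c) (hφ : ∀ j, c ≤ ‖φ j‖) (b : ι → 𝕜) :
    ‖∑ j, b j • g j‖ ^ 2 ≤ (K * C * (2 / c)) ^ 2 * ∑ j, ‖b j‖ ^ 2 := by
  classical
  choose f hf hf_norm using fun j ↦ exists_apply_eq_one_norm_le hc (hφ j)
  calc ‖∑ j, b j • g j‖ ^ 2 ≤ (K * 𝔼 ε : ι → ℤˣ, ‖∑ k, ε k • b k • f k‖) ^ 2 := by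
        gcongr
        exact hK.norm_sum_smul_le hf b
    _ ≤ K ^ 2 * 𝔼 ε : ι → ℤˣ, ‖∑ k, ε k • b k • f k‖ ^ 2 := by
        rw [mul_pow]
        gcongr
        exact_mod_cast rpow_expect_le_expect_rpow one_le_two
          fun ε : ι → ℤˣ ↦ norm_nonneg (∑ k, ε k • b k • f k)
    _ ≤ K ^ 2 * (C ^ 2 * ∑ k, ‖b k • f k‖ ^ 2) := by
        gcongr
        exact hE.expect_norm_sq_le _
    _ ≤ K ^ 2 * (C ^ 2 * ∑ k, (‖b k‖ * (2 / c)) ^ 2) := by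
        gcongr with k
        rw [norm_smul]
        gcongr
        exact hf_norm k
    _ = (K * C * (2 / c)) ^ 2 * ∑ j, ‖b j‖ ^ 2 := by
        simp only [mul_pow, ← Finset.sum_mul]
        ring

end Finite

theorem IsUnconditionalFrame.hasCotypeTwo [CompleteSpace E] {g : ι → E}
    {φ : ι → E →L[𝕜] 𝕜} (h : IsUnconditionalFrame g φ) {C c η : ℝ} (hE : HasTypeTwo E C)
    (hc : 0 < c) (hφ : ∀ j, c ≤ ‖φ j‖) {H : Type*}
    [NormedAddCommGroup H] [InnerProductSpace 𝕜 H] {u : E →L[𝕜] H} (hη : 0 < η)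
    (hu : ∀ j, η ≤ ‖u (g j)‖) : ∃ D, HasCotypeTwo E D := by
  obtain ⟨K, hK⟩ := h.exists_hasSignBound
  set A := K * C * (2 / c)
  set B := ‖u‖ * K / η
  refine ⟨A * B, fun n x ↦ ?_⟩
  have partial_sums (s : Finset ι) : ∑ i, ‖∑ j ∈ s, φ j (x i) • g j‖ ^ 2
      ≤ (A * B) ^ 2 * 𝔼 ε : Fin n → ℤˣ, ‖∑ i, ε i • x i‖ ^ 2 := by
    calc ∑ i, ‖∑ j ∈ s, φ j (x i) • g j‖ ^ 2
        ≤ ∑ i, A ^ 2 * ∑ j : s, ‖φ j (x i)‖ ^ 2 := by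
          gcongr with i
          rw [← Finset.sum_coe_sort]
          exact (hK s).norm_sum_smul_sq_le hE hc (fun j ↦ hφ j) _
      _ = A ^ 2 * 𝔼 ε : Fin n → ℤˣ, ∑ j : s, ‖φ j (∑ i, ε i • x i)‖ ^ 2 := by
          rw [← Finset.mul_sum, Finset.sum_comm, Finset.expect_sum_comm]
          simp only [map_sum, Units.smul_def, map_zsmul]
          simp only [← Units.smul_def, expect_norm_sq_sum_smul 𝕜]
      _ ≤ A ^ 2 * 𝔼 ε : Fin n → ℤˣ, B ^ 2 * ‖∑ i, ε i • x i‖ ^ 2 := by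
          gcongr with ε
          exact (hK s).sum_norm_sq_le hη (fun j ↦ hu j) _
      _ = (A * B) ^ 2 * 𝔼 ε : Fin n → ℤˣ, ‖∑ i, ε i • x i‖ ^ 2 := by
          rw [← Finset.mul_expect]
          ring
  exact le_of_tendsto' (tendsto_finsetSum _ fun i _ ↦ (h (x i)).norm.pow 2) partial_sums

end SignBound

section Disjoint

theorem norm_sum_rpow_of_pairwise_eq_zero {E ι : Type*} [NormedAddCommGroup E] [Fintype ι] {q : ℝ}
    (hq : q ≠ 0) {z : ι → E} (hz : Pairwise fun i j ↦ z i = 0 ∨ z j = 0) :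
    ‖∑ i, z i‖ ^ q = ∑ i, ‖z i‖ ^ q := by
  by_cases h : ∃ i, z i ≠ 0
  · obtain ⟨i, hi⟩ := h
    have hne (j : ι) (hj : j ≠ i) : z j = 0 := (hz hj).resolve_right hi
    rw [Fintype.sum_eq_single i hne, Fintype.sum_eq_single i fun j hj ↦ by
      rw [hne j hj, norm_zero, Real.zero_rpow hq]]
  · push Not at h
    simp [h, hq]

variable {α E : Type*} [MeasurableSpace α] {μ : Measure α} [NormedAddCommGroup E] {p : ℝ≥0∞}

theorem norm_sum_units_smul_rpow_of_disjoint {ι : Type*} [Fintype ι] (hp₀ : p ≠ 0) (hp_top : p ≠ ∞)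
    {F : ι → Lp E p μ} (hF : ∀ᵐ x ∂μ, Pairwise fun i j ↦ F i x = 0 ∨ F j x = 0)
    (ε : ι → ℤˣ) : ‖∑ i, ε i • F i‖ ^ p.toReal = ∑ i, ‖F i‖ ^ p.toReal := by
  simp only [Lp_norm_rpow_toReal hp₀ hp_top]
  rw [← integral_finsetSum _ fun i _ ↦ (Lp.memLp (F i)).integrable_norm_rpow hp₀ hp_top]
  refine integral_congr_ae ?_
  filter_upwards [hF, coeFn_sum_units_smul F] with x hx hsum
  rw [hsum, norm_sum_rpow_of_pairwise_eq_zero (ENNReal.toReal_ne_zero.mpr ⟨hp₀, hp_top⟩)]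
  · simp only [norm_units_zsmul]
  · exact fun i j hij ↦ (hx hij).imp (by simp +contextual) (by simp +contextual)

theorem exists_pairwise_disjoint_norm_eq_one {𝕜 : Type*} [RCLike 𝕜] [Fact (1 ≤ p)] (hp_top : p ≠ ∞)
    {s : ℕ → Set α} (hs : ∀ n, MeasurableSet (s n))
    (hs_disj : Pairwise (Function.onFun Disjoint s)) (hμs : ∀ n, μ (s n) ≠ 0)
    (hμs_top : ∀ n, μ (s n) ≠ ∞) :
    ∃ F : ℕ → Lp 𝕜 p μ, (∀ n, ‖F n‖ = 1) ∧
      ∀ᵐ x ∂μ, Pairwise fun m n ↦ F m x = 0 ∨ F n x = 0 := by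
  have p_ne_zero : p ≠ 0 := (one_pos.trans_le Fact.out).ne'
  let G n : Lp 𝕜 p μ := indicatorConstLp p (hs n) (hμs_top n) 1
  have G_norm_ne_zero n : ‖G n‖ ≠ 0 := by
    rw [norm_indicatorConstLp p_ne_zero hp_top, norm_one, one_mul]
    exact (Real.rpow_pos_of_pos (ENNReal.toReal_pos (hμs n) (hμs_top n)) _).ne'
  refine ⟨fun n ↦ ((‖G n‖⁻¹ : ℝ) : 𝕜) • G n, fun n ↦ ?_, ?_⟩
  · rw [norm_smul, RCLike.norm_ofReal, abs_inv, abs_norm, inv_mul_cancel₀ (G_norm_ne_zero n)]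
  · have G_ae : ∀ᵐ x ∂μ, ∀ n, G n x = (s n).indicator (fun _ ↦ 1) x :=
      ae_all_iff.mpr fun n ↦ indicatorConstLp_coeFn
    have smul_ae : ∀ᵐ x ∂μ, ∀ n, (((‖G n‖⁻¹ : ℝ) : 𝕜) • G n) x = ((‖G n‖⁻¹ : ℝ) : 𝕜) • G n x :=
      ae_all_iff.mpr fun n ↦ Lp.coeFn_smul _ _
    filter_upwards [G_ae, smul_ae] with x hG hsmul m n hmn
    have hx : x ∉ s m ∨ x ∉ s n := by
      by_contra! h
      exact Set.disjoint_left.mp (hs_disj hmn) h.1 h.2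
    refine hx.imp (fun h ↦ ?_) (fun h ↦ ?_) <;>
      rw [hsmul, hG, Set.indicator_of_notMem h, smul_zero]

theorem not_hasCotypeTwo_Lp [Fact (1 ≤ p)] (hp : 2 < p) (hp_top : p ≠ ∞) {F : ℕ → Lp E p μ}
    (hF_norm : ∀ n, ‖F n‖ = 1) (hF : ∀ᵐ x ∂μ, Pairwise fun m n ↦ F m x = 0 ∨ F n x = 0) (C : ℝ) :
    ¬HasCotypeTwo (Lp E p μ) C := by
  intro hC
  have p_ne_zero : p ≠ 0 := (two_pos.trans hp).ne'
  have two_lt : 2 < p.toReal := by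
    simpa using (ENNReal.toReal_lt_toReal ENNReal.ofNat_ne_top hp_top).mpr hp
  have p_pos : 0 < p.toReal := two_pos.trans two_lt
  have norm_sum (n : ℕ) (ε : Fin n → ℤˣ) : ‖∑ i, ε i • F i‖ ^ 2 = (n : ℝ) ^ (2 / p.toReal) := by
    have hF_fin : ∀ᵐ x ∂μ, Pairwise fun i j : Fin n ↦ F i x = 0 ∨ F j x = 0 :=
      hF.mono fun x hx i j hij ↦ hx (Fin.val_ne_of_ne hij)
    have h := norm_sum_units_smul_rpow_of_disjoint p_ne_zero hp_top hF_fin ε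
    simp only [hF_norm, Real.one_rpow, Finset.sum_const, Finset.card_univ, Fintype.card_fin,
      nsmul_eq_mul, mul_one] at h
    rw [← h, ← Real.rpow_mul (norm_nonneg _), mul_div_cancel₀ _ p_pos.ne', Real.rpow_two]
  have cotype (n : ℕ) : (n : ℝ) ≤ C ^ 2 * (n : ℝ) ^ (2 / p.toReal) := by
    simpa [hF_norm, norm_sum] using hC fun i : Fin n ↦ F i
  have exponent_pos : 0 < 1 - 2 / p.toReal := by
    rw [sub_pos, div_lt_one p_pos]
    exact two_lt
  have unbounded := (tendsto_rpow_atTop exponent_pos).comp (tendsto_natCast_atTop_atTop (R := ℝ))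
  obtain ⟨n, hn, hn_pos⟩ := ((unbounded.eventually_gt_atTop (C ^ 2)).and
    (Filter.eventually_gt_atTop 0)).exists
  have n_pos : (0 : ℝ) < n := Nat.cast_pos.mpr hn_pos
  rw [Function.comp_apply, Real.rpow_sub n_pos, Real.rpow_one, lt_div_iff₀ (by positivity)] at hn
  exact hn.not_ge (cotype n)

end Disjoint

section Inclusion

variable {α E : Type*} [MeasurableSpace α] {μ : Measure α} [IsFiniteMeasure μ]
  [NormedAddCommGroup E] {p q : ℝ≥0∞}

theorem norm_inclusion_antitone_le (hp : p ≠ 0) (hpq : p ≤ q) (f : Lp E q μ) :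
    ‖AddSubgroup.inclusion (Lp.antitone hpq) f‖ ≤
      (μ Set.univ ^ (1 / p.toReal - 1 / q.toReal)).toReal * ‖f‖ := by
  have exponent_nonneg : 0 ≤ 1 / p.toReal - 1 / q.toReal := by
    rw [sub_nonneg]
    obtain rfl | hq := eq_or_ne q ∞
    · simp
    · have := ENNReal.toReal_pos hp (ne_top_of_le_ne_top hq hpq)
      gcongr
  rw [Lp.norm_def, Lp.norm_def, mul_comm, ← ENNReal.toReal_mul]
  exact ENNReal.toReal_mono
    (ENNReal.mul_ne_top (Lp.eLpNorm_ne_top f)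
      (ENNReal.rpow_ne_top_of_nonneg exponent_nonneg (measure_ne_top μ _)))
    (eLpNorm_le_eLpNorm_mul_rpow_measure_univ hpq (Lp.aestronglyMeasurable f))

/-- The inclusion of `L^q` into `L^p` over a finite measure, for `p ≤ q`. -/
noncomputable def lpInclusion (𝕜 : Type*) [NormedField 𝕜] [NormedSpace 𝕜 E] [Fact (1 ≤ p)]
    [Fact (1 ≤ q)] (hpq : p ≤ q) : Lp E q μ →L[𝕜] Lp E p μ :=
  LinearMap.mkContinuous
    { toFun := AddSubgroup.inclusion (Lp.antitone hpq)
      map_add' := map_add _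
      map_smul' := fun _ _ ↦ rfl }
    (μ Set.univ ^ (1 / p.toReal - 1 / q.toReal)).toReal
    (norm_inclusion_antitone_le (one_pos.trans_le Fact.out).ne' hpq)

theorem coeFn_lpInclusion (𝕜 : Type*) [NormedField 𝕜] [NormedSpace 𝕜 E] [Fact (1 ≤ p)]
    [Fact (1 ≤ q)] (hpq : p ≤ q) (f : Lp E q μ) : ⇑(lpInclusion 𝕜 hpq f) = f :=
  rfl

theorem norm_rpow_le_mul_norm_lpInclusion_rpow (𝕜 : Type*) [NormedField 𝕜] [NormedSpace 𝕜 E]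
    [Fact (1 ≤ p)] [Fact (1 ≤ q)] (hpq : p ≤ q) (hq : q ≠ ∞) {M : ℝ} {f : Lp E q μ}
    (hf : ∀ᵐ x ∂μ, ‖f x‖ ≤ M) :
    ‖f‖ ^ q.toReal ≤ M ^ (q.toReal - p.toReal) * ‖lpInclusion 𝕜 hpq f‖ ^ p.toReal := by
  have hp : p ≠ ∞ := ne_top_of_le_ne_top hq hpq
  have p_ne_zero : p ≠ 0 := (one_pos.trans_le Fact.out).ne'
  have p_pos : 0 < p.toReal := ENNReal.toReal_pos p_ne_zero hp
  have p_le_q : p.toReal ≤ q.toReal := ENNReal.toReal_mono hq hpq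
  have q_ne_zero : q ≠ 0 := (one_pos.trans_le Fact.out).ne'
  rw [Lp_norm_rpow_toReal q_ne_zero hq, Lp_norm_rpow_toReal p_ne_zero hp, ← integral_const_mul,
    coeFn_lpInclusion]
  refine integral_mono_ae ((Lp.memLp f).integrable_norm_rpow q_ne_zero hq)
    (((Lp.memLp (lpInclusion 𝕜 hpq f)).integrable_norm_rpow p_ne_zero hp).const_mul _) ?_
  filter_upwards [hf] with x hx
  calc ‖f x‖ ^ q.toReal = ‖f x‖ ^ (q.toReal - p.toReal) * ‖f x‖ ^ p.toReal := by
        rw [← Real.rpow_add_of_nonneg (norm_nonneg _) (sub_nonneg.mpr p_le_q) p_pos.le,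
          sub_add_cancel]
    _ ≤ M ^ (q.toReal - p.toReal) * ‖f x‖ ^ p.toReal := by
        gcongr

theorem exists_pos_le_norm_lpInclusion (𝕜 : Type*) [NormedField 𝕜] [NormedSpace 𝕜 E]
    [Fact (1 ≤ p)] [Fact (1 ≤ q)] (hpq : p ≤ q) (hq : q ≠ ∞) {δ : ℝ} (hδ : 0 < δ) (M : ℝ) :
    ∃ η > 0, ∀ f : Lp E q μ, δ ≤ ‖f‖ → (∀ᵐ x ∂μ, ‖f x‖ ≤ M) → η ≤ ‖lpInclusion 𝕜 hpq f‖ := by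
  have p_pos : 0 < p.toReal :=
    ENNReal.toReal_pos (one_pos.trans_le Fact.out).ne' (ne_top_of_le_ne_top hq hpq)
  set A := max M 1 ^ (q.toReal - p.toReal)
  have A_pos : 0 < A := by positivity
  refine ⟨(δ ^ q.toReal / A) ^ p.toReal⁻¹, by positivity, fun f hf hfM ↦ ?_⟩
  have hf_max : ∀ᵐ x ∂μ, ‖f x‖ ≤ max M 1 := hfM.mono fun x hx ↦ hx.trans (le_max_left _ _)
  rw [Real.rpow_inv_le_iff_of_pos (by positivity) (norm_nonneg _) p_pos, div_le_iff₀' A_pos]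
  calc δ ^ q.toReal ≤ ‖f‖ ^ q.toReal := by gcongr
    _ ≤ A * ‖lpInclusion 𝕜 hpq f‖ ^ p.toReal :=
      norm_rpow_le_mul_norm_lpInclusion_rpow 𝕜 hpq hq hf_max

end Inclusion

theorem exists_pairwise_disjoint_volume_restrict_Icc_ne_zero :
    ∃ s : ℕ → Set ℝ, (∀ n, MeasurableSet (s n)) ∧ Pairwise (Function.onFun Disjoint s) ∧
      ∀ n, volume.restrict (Set.Icc (0 : ℝ) 1) (s n) ≠ 0 := by
  let a (n : ℕ) : ℝ := 1 / (n + 1)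
  have a_anti : StrictAnti a := fun m n hmn ↦ by
    have : (m : ℝ) < n := Nat.cast_lt.mpr hmn
    simp only [a]
    gcongr
  refine ⟨fun n ↦ Set.Ioc (a (n + 1)) (a n), fun n ↦ measurableSet_Ioc,
    a_anti.antitone.pairwise_disjoint_on_Ioc_succ, fun n ↦ ?_⟩
  have subset : Set.Ioc (a (n + 1)) (a n) ⊆ Set.Icc 0 1 := fun x hx ↦
    ⟨(by positivity : 0 ≤ a (n + 1)).trans hx.1.le,
      hx.2.trans (by simpa [a] using a_anti.antitone n.zero_le)⟩
  rw [Measure.restrict_apply measurableSet_Ioc, Set.inter_eq_left.mpr subset, Real.volume_Ioc]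
  simpa using a_anti n.lt_succ_self

theorem stmt11_general {α 𝕜 ι : Type*} [MeasurableSpace α] {μ : Measure α} [IsFiniteMeasure μ]
    [RCLike 𝕜] {p : ℝ≥0∞} [Fact (1 ≤ p)] (hp : 2 < p) (hp_top : p ≠ ∞) {s : ℕ → Set α}
    (hs : ∀ n, MeasurableSet (s n)) (hs_disj : Pairwise (Function.onFun Disjoint s))
    (hμs : ∀ n, μ (s n) ≠ 0) {g : ι → Lp 𝕜 p μ} {φ : ι → Lp 𝕜 p μ →L[𝕜] 𝕜}
    (hg : IsUnconditionalFrame g φ) {δ M : ℝ} (hδ : 0 < δ) (hg_norm : ∀ j, δ ≤ ‖g j‖)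
    (hg_bdd : ∀ j, ∀ᵐ x ∂μ, ‖g j x‖ ≤ M) :
    (⨅ j, ‖φ j‖) = 0 ∧ ¬∃ c : ℝ, 0 < c ∧ ∀ j, c ≤ ‖φ j‖ := by
  have not_bdd_below : ¬∃ c : ℝ, 0 < c ∧ ∀ j, c ≤ ‖φ j‖ := by
    rintro ⟨c, hc, hφ⟩
    obtain ⟨η, hη, hu⟩ := exists_pos_le_norm_lpInclusion 𝕜 (E := 𝕜) (μ := μ) hp.le hp_top hδ M
    obtain ⟨D, hD⟩ := hg.hasCotypeTwo (hasTypeTwo_Lp hp.le hp_top) hc hφ hη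
      fun j ↦ hu (g j) (hg_norm j) (hg_bdd j)
    obtain ⟨F, hF_norm, hF_disj⟩ :=
      exists_pairwise_disjoint_norm_eq_one (𝕜 := 𝕜) hp_top hs hs_disj hμs fun n ↦
        measure_ne_top μ (s n)
    exact not_hasCotypeTwo_Lp hp hp_top hF_norm hF_disj D hD
  refine ⟨?_, not_bdd_below⟩
  by_contra h
  have bddBelow : BddBelow (Set.range fun j ↦ ‖φ j‖) :=
    ⟨0, Set.forall_mem_range.mpr fun j ↦ norm_nonneg _⟩
  exact not_bdd_below ⟨_, (Real.iInf_nonneg fun j ↦ norm_nonneg _).lt_of_ne' h, ciInf_le bddBelow⟩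

/-- Let `p > 2` and `{(g_j, g_j*)}` be an unconditional Schauder frame
for `L^p[0,1]` with `‖g_j‖_p = 1` and `|g_j(x)| ≤ M` a.e. Then `inf_j ‖g_j*‖ = 0`;
in particular `{g_j*}` is not seminormalized. -/
theorem stmt11 (p : ℝ) (hp : 2 < p) [Fact (1 ≤ ENNReal.ofReal p)]
    (g : ℕ → Lp ℂ (ENNReal.ofReal p) (volume.restrict (Set.Icc (0:ℝ) 1)))
    (gs : ℕ → Lp ℂ (ENNReal.ofReal p) (volume.restrict (Set.Icc (0:ℝ) 1)) →L[ℂ] ℂ)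
    (hframe : ∀ f, HasSum (fun j => gs j f • g j) f)
    (hnorm : ∀ j, ‖g j‖ = 1)
    (M : ℝ) (hbdd : ∀ j, ∀ᵐ t ∂(volume.restrict (Set.Icc (0:ℝ) 1)), ‖g j t‖ ≤ M) :
    (⨅ j, ‖gs j‖) = 0 ∧ ¬ ∃ c : ℝ, 0 < c ∧ ∀ j, c ≤ ‖gs j‖ := by
  obtain ⟨s, hs, hs_disj, hμs⟩ := exists_pairwise_disjoint_volume_restrict_Icc_ne_zero
  exact stmt11_general (ENNReal.ofNat_lt_ofReal.mpr hp) ENNReal.ofReal_ne_top hs hs_disj hμs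
    hframe one_pos (fun j ↦ (hnorm j).ge) hbdd
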